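/- A_4(11,8) ≤ 60 and A_4(12,8) ≤ 240: every code C ⊆ (Fin 4)^{11} with minimum Hamming distance at least 8 has at most 60 elements, and every code C ⊆ (Fin 4)^{12} with minimum Hamming distance at least 8 has at most 240 elements. -/

import Mathlib

/-! Split a code `C` by the symbol in a coordinate `j` into `q` subcodes, effectively of length
`n - 1`, and let `s` be the number of words one of them lacks to have `q * m`. If
`m = d / (q * d - (n - 1) * (q - 1))`, then the excess of the distance over `d`, summed over all
pairs in the subcode, equals `(n - d - 1) * s ^ 2 + d * s` minus the squared deviations from `m` of
the symbol counts in the other coordinates. Hence `0 ≤ s` (Plotkin's bound), a subcode with `s = 0`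
contains every symbol exactly `m` times in each other coordinate, and in general the total excess is
at most `(n - d - 1) * s * (s - 1)`.

Now weight each pair of words by agreement times excess. The last estimate bounds the total weight
of a code lacking fewer than `q` words to have `q ^ 2 * m`. On the other hand such a code has a
subcode `B` with `s = 0`, and a word outside `B` has `m * (n - 1)` agreements with `B` altogether.
If `n - d` does not divide this number, some agreement lies strictly between `0` and `n - d`, so
every word outside `B` contributes at least `n - d - 1` to the total weight. -/

open Finset

theorem two_mul_sum_filter_not_sum_filter_le {β R : Type*} [Semiring R] [PartialOrder R]
    [IsOrderedRing R] (s : Finset β) (p : β → Prop) [DecidablePred p] {f : β → β → R}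
    (hf : ∀ u ∈ s, ∀ v ∈ s, 0 ≤ f u v) (hsymm : ∀ u v, f u v = f v u) :
    2 * ∑ u ∈ s with ¬p u, ∑ v ∈ s with p v, f u v ≤ ∑ u ∈ s, ∑ v ∈ s, f u v := by
  have restrict (r t : β → Prop) [DecidablePred r] [DecidablePred t] :
      ∑ u ∈ s with r u, ∑ v ∈ s with t v, f u v ≤ ∑ u ∈ s with r u, ∑ v ∈ s, f u v :=
    sum_le_sum fun u hu => sum_le_sum_of_subset_of_nonneg (filter_subset _ _)
      fun v hv _ => hf u (mem_filter.1 hu).1 v hv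
  calc 2 * ∑ u ∈ s with ¬p u, ∑ v ∈ s with p v, f u v
      = ∑ u ∈ s with p u, ∑ v ∈ s with ¬p v, f u v +
          ∑ u ∈ s with ¬p u, ∑ v ∈ s with p v, f u v := by
        rw [two_mul, sum_comm]
        simp only [hsymm]
    _ ≤ ∑ u ∈ s with p u, ∑ v ∈ s, f u v + ∑ u ∈ s with ¬p u, ∑ v ∈ s, f u v :=
        add_le_add (restrict _ _) (restrict _ _)
    _ = ∑ u ∈ s, ∑ v ∈ s, f u v := sum_filter_add_sum_filter_not s p _

variable {ι α : Type*} [DecidableEq α]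

section Subcode

/-- The words of `C` with symbol `a` in coordinate `j`, kept at full length. -/
def subcode (C : Finset (ι → α)) (j : ι) (a : α) : Finset (ι → α) :=
  {u ∈ C | u j = a}

/-- The number of words that `subcode C j a` lacks to have `M` elements; it is negative if the
subcode has more. -/
def deficit (M : ℤ) (C : Finset (ι → α)) (j : ι) (a : α) : ℤ :=
  M - #(subcode C j a)

variable {C : Finset (ι → α)} {j : ι} {a b : α}

theorem mem_subcode {u : ι → α} : u ∈ subcode C j a ↔ u ∈ C ∧ u j = a :=
  mem_filter

theorem subcode_subset : subcode C j a ⊆ C :=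
  filter_subset _ _

theorem subcode_subcode_self : subcode (subcode C j a) j a = subcode C j a :=
  filter_true_of_mem fun _ hu => (mem_subcode.1 hu).2

theorem subcode_subcode_of_ne (h : b ≠ a) : subcode (subcode C j a) j b = ∅ :=
  filter_false_of_mem fun _ hu hb => h (hb.symm.trans (mem_subcode.1 hu).2)

variable [Fintype α] (C) (j)

theorem sum_card_subcode : ∑ a, (#(subcode C j a) : ℤ) = #C := by
  exact_mod_cast (card_eq_sum_card_fiberwise fun _ _ => mem_univ _).symm

theorem sum_card_subcode_subcode_sq (a : α) :
    ∑ b, (#(subcode (subcode C j a) j b) : ℤ) ^ 2 = (#(subcode C j a) : ℤ) ^ 2 := by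
  rw [Fintype.sum_eq_single a fun b hb => by simp [subcode_subcode_of_ne hb],
    subcode_subcode_self]

theorem sum_sum_ite_eq_sum_subcode (g : (ι → α) → (ι → α) → ℤ) :
    ∑ u ∈ C, ∑ v ∈ C, (if u j = v j then g u v else 0) =
      ∑ a, ∑ u ∈ subcode C j a, ∑ v ∈ subcode C j a, g u v := by
  rw [← sum_fiberwise C fun u => u j]
  refine sum_congr rfl fun a _ => sum_congr rfl fun u hu => ?_
  rw [subcode, sum_filter, (mem_filter.1 hu).2]
  simp only [eq_comm]

theorem sum_deficit (M : ℤ) : ∑ a, deficit M C j a = Fintype.card α * M - #C := by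
  simp only [deficit, sum_sub_distrib, sum_card_subcode, sum_const, card_univ, nsmul_eq_mul]

theorem sum_deficit_subcode (M : ℤ) (k : ι) (a : α) :
    ∑ b, deficit M (subcode C j a) k b = deficit (Fintype.card α * M) C j a :=
  sum_deficit _ _ _

theorem sum_deficit_sq (M : ℤ) :
    ∑ a, deficit M C j a ^ 2 =
      Fintype.card α * M ^ 2 - 2 * M * #C + ∑ a, (#(subcode C j a) : ℤ) ^ 2 := by
  simp only [deficit, sub_sq, sum_add_distrib, sum_sub_distrib, ← mul_sum, sum_card_subcode,
    sum_const, card_univ, nsmul_eq_mul]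

end Subcode

variable [Fintype ι]

section Words

/-- The condition that `C` has minimum distance at least `d`. -/
def HasMinDist (d : ℕ) (C : Finset (ι → α)) : Prop :=
  ∀ u ∈ C, ∀ v ∈ C, u ≠ v → d ≤ hammingDist u v

/-- The number of coordinates in which two words agree, as an integer. -/
def agreement (u v : ι → α) : ℤ :=
  #{i | u i = v i}

/-- The amount by which the distance of two distinct words exceeds the design distance `d`. It is
set to `0` on the diagonal, so that it is nonnegative on every code of minimum distance at least
`d`. -/
def excess (d : ℕ) (u v : ι → α) : ℤ :=
  if u = v then 0 else hammingDist u v - d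

variable {d : ℕ} {C : Finset (ι → α)} {u v : ι → α}

theorem agreement_add_hammingDist (u v : ι → α) :
    agreement u v + hammingDist u v = Fintype.card ι := by
  unfold agreement hammingDist
  exact_mod_cast card_filter_add_card_filter_not (s := univ) fun i => u i = v i

theorem agreement_self (u : ι → α) : agreement u u = Fintype.card ι := by
  simp [agreement]

theorem agreement_comm (u v : ι → α) : agreement u v = agreement v u := by
  simp only [agreement, eq_comm]

theorem agreement_nonneg (u v : ι → α) : 0 ≤ agreement u v :=
  Int.natCast_nonneg _

theorem agreement_eq_sum (u v : ι → α) : agreement u v = ∑ i, if u i = v i then 1 else 0 :=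
  (sum_boole _ _).symm

theorem excess_comm (d : ℕ) (u v : ι → α) : excess d u v = excess d v u := by
  simp only [excess, eq_comm, hammingDist_comm]

theorem excess_of_ne (h : u ≠ v) : excess d u v = Fintype.card ι - d - agreement u v := by
  rw [excess, if_neg h, ← agreement_add_hammingDist u v]
  ring

theorem excess_eq (d : ℕ) (u v : ι → α) :
    excess d u v = Fintype.card ι - d - agreement u v + if u = v then (d : ℤ) else 0 := by
  rcases eq_or_ne u v with rfl | h
  · simp [excess, agreement_self]
  · rw [excess_of_ne h, if_neg h, add_zero]

theorem HasMinDist.mono {D : Finset (ι → α)} (hC : HasMinDist d C) (hDC : D ⊆ C) :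
    HasMinDist d D :=
  fun u hu v hv => hC u (hDC hu) v (hDC hv)

theorem HasMinDist.excess_nonneg (hC : HasMinDist d C) (hu : u ∈ C) (hv : v ∈ C) :
    0 ≤ excess d u v := by
  unfold excess
  split_ifs with h
  · rfl
  · exact sub_nonneg.2 (mod_cast hC u hu v hv h)

theorem HasMinDist.sum_sum_excess_nonneg (hC : HasMinDist d C) :
    0 ≤ ∑ u ∈ C, ∑ v ∈ C, excess d u v :=
  sum_nonneg fun _ hu => sum_nonneg fun _ hv => hC.excess_nonneg hu hv

theorem HasMinDist.agreement_mul_excess_nonneg (hC : HasMinDist d C) (hu : u ∈ C) (hv : v ∈ C) :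
    0 ≤ agreement u v * excess d u v :=
  mul_nonneg (agreement_nonneg u v) (hC.excess_nonneg hu hv)

end Words

section PairSums

variable (C : Finset (ι → α))

theorem sum_agreement (w : ι → α) :
    ∑ v ∈ C, agreement w v = ∑ k, (#(subcode C k (w k)) : ℤ) := by
  simp only [agreement_eq_sum]
  rw [sum_comm]
  simp only [sum_boole, subcode, eq_comm]

variable [Fintype α]

theorem sum_sum_agreement_mul (g : (ι → α) → (ι → α) → ℤ) :
    ∑ u ∈ C, ∑ v ∈ C, agreement u v * g u v =
      ∑ j, ∑ a, ∑ u ∈ subcode C j a, ∑ v ∈ subcode C j a, g u v := by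
  simp_rw [← sum_sum_ite_eq_sum_subcode, agreement_eq_sum, sum_mul, ite_mul, one_mul, zero_mul]
  rw [sum_comm (s := univ)]
  exact sum_congr rfl fun u _ => sum_comm

theorem sum_sum_agreement :
    ∑ u ∈ C, ∑ v ∈ C, agreement u v = ∑ j, ∑ a, (#(subcode C j a) : ℤ) ^ 2 := by
  simpa [sq] using sum_sum_agreement_mul C fun _ _ => 1

theorem sum_sum_excess (d : ℕ) :
    ∑ u ∈ C, ∑ v ∈ C, excess d u v =
      (Fintype.card ι - d) * (#C : ℤ) ^ 2 + d * #C -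
        ∑ j, ∑ a, (#(subcode C j a) : ℤ) ^ 2 := by
  have diagonal : ∑ u ∈ C, ∑ v ∈ C, (if u = v then (d : ℤ) else 0) = d * #C := by
    rw [sum_congr rfl fun u hu => by rw [sum_ite_eq, if_pos hu], sum_const, nsmul_eq_mul, mul_comm]
  simp only [excess_eq, sum_add_distrib, sum_sub_distrib, diagonal, sum_sum_agreement, sum_const,
    nsmul_eq_mul]
  ring

end PairSums

section Plotkin

/-- The relation `d = m * (q * d - (n - 1) * (q - 1))` between the parameters of a code. It says
that Plotkin's bound for words of length `n - 1` over `q` symbols equals `q * m`. -/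
def PlotkinParameters (ι α : Type*) [Fintype ι] [Fintype α] (d m : ℕ) : Prop :=
  (m * (Fintype.card α * d - (Fintype.card ι - 1) * (Fintype.card α - 1)) : ℤ) = d

variable [Fintype α] {d m : ℕ} {C : Finset (ι → α)} {j : ι} {a : α}

theorem PlotkinParameters.sum_sum_excess_add_sum_deficit_sq [DecidableEq ι]
    (hm : PlotkinParameters ι α d m) (C : Finset (ι → α)) (j : ι) (a : α) :
    ∑ u ∈ subcode C j a, ∑ v ∈ subcode C j a, excess d u v +
        ∑ k ∈ univ.erase j, ∑ b, deficit m (subcode C j a) k b ^ 2 =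
      (Fintype.card ι - d - 1) * deficit (Fintype.card α * m) C j a ^ 2 +
        d * deficit (Fintype.card α * m) C j a := by
  have hcard : (#(univ.erase j) : ℤ) = Fintype.card ι - 1 := by
    rw [cast_card_erase_of_mem (mem_univ j), card_univ]
  rw [sum_sum_excess, ← add_sum_erase univ _ (mem_univ j), sum_card_subcode_subcode_sq]
  simp only [sum_deficit_sq, sum_add_distrib, sum_const, nsmul_eq_mul, hcard]
  unfold deficit
  unfold PlotkinParameters at hm
  linear_combination (m * Fintype.card α - 2 * #(subcode C j a) : ℤ) * hm

theorem PlotkinParameters.sum_sum_excess_le (hm : PlotkinParameters ι α d m)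
    (C : Finset (ι → α)) (j : ι) (a : α) :
    ∑ u ∈ subcode C j a, ∑ v ∈ subcode C j a, excess d u v ≤
      (Fintype.card ι - d - 1) * (deficit (Fintype.card α * m) C j a *
        (deficit (Fintype.card α * m) C j a - 1)) := by
  classical
  set s := deficit (Fintype.card α * m) C j a with hs
  have deviations (k : ι) : s ≤ ∑ b, deficit m (subcode C j a) k b ^ 2 := by
    rw [hs, ← sum_deficit_subcode C j m k a]
    exact sum_le_sum fun b _ => Int.le_self_sq _
  have hsum := card_nsmul_le_sum (univ.erase j) _ s fun k _ => deviations k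
  rw [nsmul_eq_mul, cast_card_erase_of_mem (mem_univ j), card_univ] at hsum
  linarith [hm.sum_sum_excess_add_sum_deficit_sq C j a]

theorem HasMinDist.deficit_nonneg (hC : HasMinDist d C) (hm : PlotkinParameters ι α d m)
    (hd : 0 < d) (j : ι) (a : α) : 0 ≤ deficit (Fintype.card α * m) C j a := by
  classical
  set s := deficit (Fintype.card α * m) C j a with hs
  obtain ⟨e, he⟩ : ∃ e : ℤ,
      e = Fintype.card α * d - (Fintype.card ι - 1) * (Fintype.card α - 1) := ⟨_, rfl⟩
  have hme : m * e = d := he ▸ hm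
  have e_pos : 0 < e := pos_of_mul_pos_right (hme ▸ mod_cast hd) (Int.natCast_nonneg m)
  have deviations (k : ι) :
      s ^ 2 ≤ Fintype.card α * ∑ b, deficit m (subcode C j a) k b ^ 2 := by
    rw [hs, ← sum_deficit_subcode C j m k a]
    exact sq_sum_le_card_mul_sum_sq
  have hsum := card_nsmul_le_sum (univ.erase j) _ (s ^ 2) fun k _ => deviations k
  rw [nsmul_eq_mul, cast_card_erase_of_mem (mem_univ j), card_univ, ← mul_sum] at hsum
  have hexcess := mul_nonneg (Int.natCast_nonneg (Fintype.card α))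
    (hC.mono (subcode_subset (j := j) (a := a))).sum_sum_excess_nonneg
  have hprod : 0 ≤ e * (s * #(subcode C j a)) := by
    have hcard : (#(subcode C j a) : ℤ) = Fintype.card α * m - s := by rw [hs, deficit]; ring
    rw [hcard]
    linear_combination hexcess + hsum +
      Fintype.card α * hm.sum_sum_excess_add_sum_deficit_sq C j a -
      Fintype.card α * s * hme + s ^ 2 * he
  rcases (#(subcode C j a)).eq_zero_or_pos with hempty | hpos
  · rw [hs, deficit, hempty, Nat.cast_zero, sub_zero]
    positivity
  · exact nonneg_of_mul_nonneg_left (nonneg_of_mul_nonneg_right hprod e_pos) (mod_cast hpos)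

theorem HasMinDist.card_subcode_subcode_of_deficit_eq_zero (hC : HasMinDist d C)
    (hm : PlotkinParameters ι α d m) (h : deficit (Fintype.card α * m) C j a = 0) {k : ι}
    (hk : k ≠ j) (b : α) : #(subcode (subcode C j a) k b) = m := by
  classical
  have hidentity := hm.sum_sum_excess_add_sum_deficit_sq C j a
  have hexcess := (hC.mono (subcode_subset (j := j) (a := a))).sum_sum_excess_nonneg
  have hcolumns : ∀ k ∈ univ.erase j, 0 ≤ ∑ b, deficit m (subcode C j a) k b ^ 2 :=
    fun k _ => sum_nonneg fun b _ => sq_nonneg _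
  have hzero : ∑ k ∈ univ.erase j, ∑ b, deficit m (subcode C j a) k b ^ 2 = 0 := by
    rw [h] at hidentity
    linarith [sum_nonneg hcolumns]
  have hcolumn := (sum_eq_zero_iff_of_nonneg hcolumns).1 hzero k (by simpa using hk)
  have hdeficit := (sum_eq_zero_iff_of_nonneg fun b _ => sq_nonneg _).1 hcolumn b (mem_univ b)
  exact_mod_cast (sub_eq_zero.1 (pow_eq_zero_iff two_ne_zero |>.1 hdeficit)).symm

end Plotkin

section Divisibility

variable [Fintype α] {d m : ℕ} {C : Finset (ι → α)} {j : ι} {a : α} {w : ι → α}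

theorem HasMinDist.sum_agreement_subcode (hC : HasMinDist d C) (hm : PlotkinParameters ι α d m)
    (h : deficit (Fintype.card α * m) C j a = 0) (hw : w j ≠ a) :
    ∑ v ∈ subcode C j a, agreement w v = m * (Fintype.card ι - 1) := by
  classical
  rw [sum_agreement, ← add_sum_erase univ _ (mem_univ j), subcode_subcode_of_ne hw,
    sum_congr rfl fun k hk => by
      rw [hC.card_subcode_subcode_of_deficit_eq_zero hm h (ne_of_mem_erase hk)],
    sum_const, nsmul_eq_mul, cast_card_erase_of_mem (mem_univ j), card_univ]
  simp [mul_comm]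

theorem HasMinDist.exists_agreement_mem_Ioo (hC : HasMinDist d C)
    (hm : PlotkinParameters ι α d m) (hdvd : ¬(Fintype.card ι - d : ℤ) ∣ m * (Fintype.card ι - 1))
    (h : deficit (Fintype.card α * m) C j a = 0) (hwC : w ∈ C) (hw : w j ≠ a) :
    ∃ v ∈ subcode C j a, agreement w v ∈ Set.Ioo (0 : ℤ) (Fintype.card ι - d) := by
  obtain ⟨v, hv, hndvd⟩ : ∃ v ∈ subcode C j a, ¬(Fintype.card ι - d : ℤ) ∣ agreement w v := by
    by_contra! hall
    exact hdvd (hC.sum_agreement_subcode hm h hw ▸ dvd_sum hall)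
  obtain ⟨hvC, hva⟩ := mem_subcode.1 hv
  have hne : w ≠ v := by
    rintro rfl
    exact hw hva
  have hle := hC.excess_nonneg hwC hvC
  rw [excess_of_ne hne, sub_nonneg] at hle
  exact ⟨v, hv, (agreement_nonneg w v).lt_of_ne fun h0 => hndvd (h0 ▸ dvd_zero _),
    hle.lt_of_ne fun heq => hndvd heq.symm.dvd⟩

theorem HasMinDist.le_sum_agreement_mul_excess (hC : HasMinDist d C)
    (hm : PlotkinParameters ι α d m) (hdvd : ¬(Fintype.card ι - d : ℤ) ∣ m * (Fintype.card ι - 1))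
    (h : deficit (Fintype.card α * m) C j a = 0) (hwC : w ∈ C) (hw : w j ≠ a) :
    Fintype.card ι - d - 1 ≤ ∑ v ∈ subcode C j a, agreement w v * excess d w v := by
  obtain ⟨v, hv, hpos, hlt⟩ := hC.exists_agreement_mem_Ioo hm hdvd h hwC hw
  have hne : w ≠ v := by
    rintro rfl
    exact hw (mem_subcode.1 hv).2
  calc (Fintype.card ι - d - 1 : ℤ)
      ≤ agreement w v * excess d w v := by
        rw [excess_of_ne hne]
        nlinarith
    _ ≤ ∑ v ∈ subcode C j a, agreement w v * excess d w v :=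
        single_le_sum (f := fun v => agreement w v * excess d w v)
          (fun v hv => hC.agreement_mul_excess_nonneg hwC (subcode_subset hv)) hv

theorem HasMinDist.le_sum_sum_agreement_mul_excess (hC : HasMinDist d C)
    (hm : PlotkinParameters ι α d m) (hdvd : ¬(Fintype.card ι - d : ℤ) ∣ m * (Fintype.card ι - 1))
    (h : deficit (Fintype.card α * m) C j a = 0) :
    2 * ((#C - Fintype.card α * m) * (Fintype.card ι - d - 1)) ≤
      ∑ u ∈ C, ∑ v ∈ C, agreement u v * excess d u v := by
  have houtside : (#{u ∈ C | ¬u j = a} : ℤ) = #C - Fintype.card α * m := by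
    have hsplit : (#(subcode C j a) + #{u ∈ C | ¬u j = a} : ℤ) = #C :=
      mod_cast card_filter_add_card_filter_not fun u : ι → α => u j = a
    rw [deficit] at h
    linarith
  have hsum := card_nsmul_le_sum {u ∈ C | ¬u j = a}
    (fun u => ∑ v ∈ subcode C j a, agreement u v * excess d u v) (Fintype.card ι - d - 1)
    fun u hu => hC.le_sum_agreement_mul_excess hm hdvd h (mem_filter.1 hu).1 (mem_filter.1 hu).2
  rw [nsmul_eq_mul, houtside] at hsum
  refine (mul_le_mul_of_nonneg_left hsum zero_le_two).trans ?_
  exact two_mul_sum_filter_not_sum_filter_le C _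
    (fun u hu v hv => hC.agreement_mul_excess_nonneg hu hv)
    fun u v => by rw [agreement_comm, excess_comm]

theorem HasMinDist.sum_sum_agreement_mul_excess_le (hC : HasMinDist d C)
    (hm : PlotkinParameters ι α d m) (hd : 0 < d) (hdι : d < Fintype.card ι) {r : ℤ}
    (hr : #C + r = Fintype.card α * (Fintype.card α * m)) :
    ∑ u ∈ C, ∑ v ∈ C, agreement u v * excess d u v ≤
      Fintype.card ι * ((Fintype.card ι - d - 1) * (r * (r - 1))) := by
  rw [sum_sum_agreement_mul, ← nsmul_eq_mul, ← card_univ]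
  refine sum_le_card_nsmul _ _ _ fun j _ => ?_
  have hsum : ∑ a, deficit (Fintype.card α * m) C j a = r := by
    rw [sum_deficit]
    linarith
  have hsq := sum_sq_le_sq_sum_of_nonneg fun a (_ : a ∈ univ) => hC.deficit_nonneg hm hd j a
  calc ∑ a, ∑ u ∈ subcode C j a, ∑ v ∈ subcode C j a, excess d u v
      ≤ ∑ a, (Fintype.card ι - d - 1 : ℤ) * (deficit (Fintype.card α * m) C j a *
          (deficit (Fintype.card α * m) C j a - 1)) :=
        sum_le_sum fun a _ => hm.sum_sum_excess_le C j a
    _ = (Fintype.card ι - d - 1) *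
          (∑ a, deficit (Fintype.card α * m) C j a ^ 2 - r) := by
        simp only [← mul_sum, mul_sub, mul_one, ← sq, sum_sub_distrib, hsum]
    _ ≤ (Fintype.card ι - d - 1) * (r * (r - 1)) := by
        rw [hsum] at hsq
        exact mul_le_mul_of_nonneg_left (by linarith) (by omega)

theorem HasMinDist.exists_deficit_eq_zero (hC : HasMinDist d C) (hm : PlotkinParameters ι α d m)
    (hd : 0 < d) (j : ι)
    (hcard : (Fintype.card α * (Fintype.card α * m) - #C : ℤ) < Fintype.card α) :
    ∃ a, deficit (Fintype.card α * m) C j a = 0 := by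
  obtain ⟨a, -, ha⟩ := exists_lt_of_sum_lt (s := univ) (g := fun _ => (1 : ℤ))
    (f := deficit (Fintype.card α * m) C j) (by simpa [sum_deficit] using hcard)
  exact ⟨a, (Int.lt_add_one_iff.1 ha).antisymm (hC.deficit_nonneg hm hd j a)⟩

theorem HasMinDist.card_le [Nonempty ι] {N r : ℕ} (hd : 0 < d) (hm : PlotkinParameters ι α d m)
    (hdvd : ¬(Fintype.card ι - d : ℤ) ∣ m * (Fintype.card ι - 1))
    (hN : N + 1 + r = Fintype.card α * (Fintype.card α * m)) (hr : r < Fintype.card α)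
    (hlt : (Fintype.card ι * (r * (r - 1)) : ℤ) < 2 * (N + 1 - Fintype.card α * m))
    (hC : HasMinDist d C) : #C ≤ N := by
  by_contra! hlarge
  obtain ⟨D, hDC, hDcard⟩ := exists_subset_card_eq (Nat.succ_le_of_lt hlarge)
  have hD : HasMinDist d D := hC.mono hDC
  have hDr : (#D + r : ℤ) = Fintype.card α * (Fintype.card α * m) := by
    rw [hDcard]
    exact_mod_cast hN
  have hDlt : (Fintype.card ι * (r * (r - 1)) : ℤ) < 2 * (#D - Fintype.card α * m) := by
    rw [hDcard]
    exact_mod_cast hlt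
  let j := Classical.arbitrary ι
  obtain ⟨a, ha⟩ := hD.exists_deficit_eq_zero hm hd j (by omega)
  obtain ⟨w, hwD, hwa⟩ : ∃ w ∈ D, w j ≠ a := by
    by_contra! hall
    have hsub : subcode D j a = D := filter_true_of_mem hall
    have hrr : (0 : ℤ) ≤ Fintype.card ι * (r * (r - 1)) :=
      mul_nonneg (Int.natCast_nonneg _) (by linarith [Int.le_self_sq r])
    rw [deficit, hsub] at ha
    linarith
  obtain ⟨v, -, hpos, hltv⟩ := hD.exists_agreement_mem_Ioo hm hdvd ha hwD hwa
  have hlower := hD.le_sum_sum_agreement_mul_excess hm hdvd ha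
  have hupper := hD.sum_sum_agreement_mul_excess_le hm hd (by omega) hDr
  have hscaled := mul_lt_mul_of_pos_right hDlt
    (show (0 : ℤ) < Fintype.card ι - d - 1 by omega)
  linarith
end Divisibility

section Shortening

variable {n d N : ℕ}

theorem hammingDist_tail {u v : Fin (n + 1) → α} (h : u 0 = v 0) :
    hammingDist (Fin.tail u) (Fin.tail v) = hammingDist u v := by
  rw [hammingDist, hammingDist, Fin.card_filter_univ_succ, if_neg (not_not.2 h)]
  rfl

theorem injOn_tail_subcode (C : Finset (Fin (n + 1) → α)) (a : α) :
    Set.InjOn (Fin.tail : (Fin (n + 1) → α) → Fin n → α) (subcode C 0 a) := by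
  intro u hu v hv h
  rw [← Fin.cons_self_tail u, ← Fin.cons_self_tail v, h, (mem_subcode.1 hu).2,
    (mem_subcode.1 hv).2]

theorem HasMinDist.image_tail_subcode {C : Finset (Fin (n + 1) → α)} (hC : HasMinDist d C) (a : α) :
    HasMinDist d ((subcode C 0 a).image Fin.tail) := by
  simp only [HasMinDist, forall_mem_image, mem_subcode]
  rintro u ⟨hu, hua⟩ v ⟨hv, hva⟩ huv
  rw [hammingDist_tail (hua.trans hva.symm)]
  exact hC u hu v hv (ne_of_apply_ne _ huv)

theorem HasMinDist.card_le_mul [Fintype α]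
    (hN : ∀ D : Finset (Fin n → α), HasMinDist d D → #D ≤ N)
    {C : Finset (Fin (n + 1) → α)} (hC : HasMinDist d C) : #C ≤ N * Fintype.card α :=
  card_le_mul_card_image_of_maps_to (fun u _ => mem_univ (u 0)) N fun a _ => by
    rw [← subcode, ← card_image_of_injOn (injOn_tail_subcode C a)]
    exact hN _ (hC.image_tail_subcode a)

end Shortening

theorem A4_11_8_and_A4_12_8_general [Fintype α] {n d m N r : ℕ} [NeZero n] (hd : 0 < d)
    (hm : PlotkinParameters (Fin n) α d m) (hdvd : ¬(n - d : ℤ) ∣ m * (n - 1))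
    (hN : N + 1 + r = Fintype.card α * (Fintype.card α * m)) (hr : r < Fintype.card α)
    (hlt : (n * (r * (r - 1)) : ℤ) < 2 * (N + 1 - Fintype.card α * m)) :
    (∀ C : Finset (Fin n → α), HasMinDist d C → #C ≤ N) ∧
      ∀ C : Finset (Fin (n + 1) → α), HasMinDist d C → #C ≤ N * Fintype.card α := by
  have hcard (C : Finset (Fin n → α)) (hC : HasMinDist d C) : #C ≤ N :=
    hC.card_le hd hm (by simpa using hdvd) hN hr (by simpa using hlt)
  exact ⟨hcard, fun C hC => hC.card_le_mul hcard⟩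

/-- `A_4(11,8) ≤ 60` and `A_4(12,8) ≤ 240`. -/
theorem A4_11_8_and_A4_12_8 :
    (∀ C : Finset (Fin 11 → Fin 4),
      (∀ u ∈ C, ∀ v ∈ C, u ≠ v → 8 ≤ hammingDist u v) → C.card ≤ 60)
    ∧ (∀ C : Finset (Fin 12 → Fin 4),
      (∀ u ∈ C, ∀ v ∈ C, u ≠ v → 8 ≤ hammingDist u v) → C.card ≤ 240) := by
  -- `m = 8 / (4 * 8 - 10 * 3)` and `r = 4 ^ 2 * 4 - (N + 1)`
  exact A4_11_8_and_A4_12_8_general (m := 4) (N := 60) (r := 3) (by norm_num)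
    (by simp [PlotkinParameters]) (by norm_num) (by simp) (by simp) (by simp)
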